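/- arXiv:1812.07389 — 3 statements merged into one kernel-verified Lean document; each statement's English description precedes it below -/
import Mathlib

section
/- Let H1 and H_LI be independent exponentially distributed random variables with means Ω1 > 0 and Ω_LI > 0, and let ρ > 0, 0 < a1 < 1. Then for every x ≥ 0 the random variable X = a1·ρ·H1/(ρ·H_LI + 1) has cumulative distribution function P(X ≤ x) = 1 − (a1·Ω1/(x·Ω_LI + a1·Ω1))·exp(−x/(a1·ρ·Ω1)). -/
open MeasureTheory ProbabilityTheory Real

/-!
Given the interference `HLI`, the SINR exceeds `x` exactly when `H1` exceeds a nonnegative affine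
function `Y` of `HLI`. Because the tail of `H1` is the exponential `exp (-(t / Ω1))` and `H1` is
independent of `Y`, Fubini's theorem turns the probability of `Y < H1` into the Laplace transform
`E[exp (-(Y / Ω1))]`, for any nonnegative interference. Exponential interference enters only
through the value `(1 - ΩLI * t)⁻¹` of its moment generating function.
-/

lemma measure_lt_eq_lintegral_of_indepFun {Ω α : Type*} [MeasurableSpace Ω] {μ : Measure Ω}
    [IsFiniteMeasure μ] [LinearOrder α] [TopologicalSpace α] [OrderClosedTopology α]
    [SecondCountableTopology α] [MeasurableSpace α] [OpensMeasurableSpace α] {X Y : Ω → α}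
    (hX : AEMeasurable X μ) (hY : AEMeasurable Y μ) (hXY : IndepFun X Y μ) :
    μ {ω | Y ω < X ω} = ∫⁻ ω, μ {ω' | Y ω < X ω'} ∂μ := by
  have hS : MeasurableSet {p : α × α | p.1 < p.2} := measurableSet_lt measurable_fst measurable_snd
  calc μ {ω | Y ω < X ω}
      = μ.map (fun ω ↦ (Y ω, X ω)) {p | p.1 < p.2} :=
        (Measure.map_apply_of_aemeasurable (hY.prodMk hX) hS).symm
    _ = ∫⁻ y, μ.map X (Set.Ioi y) ∂(μ.map Y) := by
        rw [hXY.symm.map_prod_eq_prod_map_map hY hX, Measure.prod_apply hS]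
        rfl
    _ = ∫⁻ ω, μ.map X (Set.Ioi (Y ω)) ∂μ :=
        lintegral_map' (measurable_measure_prodMk_left hS).aemeasurable hY
    _ = ∫⁻ ω, μ {ω' | Y ω < X ω'} ∂μ :=
        lintegral_congr fun _ ↦ Measure.map_apply_of_aemeasurable hX measurableSet_Ioi

lemma measureReal_lt_eq_mgf_of_exponential_tail {Ω : Type*} [MeasurableSpace Ω] {μ : Measure Ω}
    [IsFiniteMeasure μ] {X Y : Ω → ℝ} {r : ℝ} (hX : AEMeasurable X μ) (hY : AEMeasurable Y μ)
    (hX_tail : ∀ t, 0 ≤ t → μ {ω | t < X ω} = ENNReal.ofReal (exp (-r * t)))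
    (hY_nonneg : 0 ≤ᵐ[μ] Y) (hXY : IndepFun X Y μ) :
    μ.real {ω | Y ω < X ω} = mgf Y μ (-r) := by
  have h_lintegral : μ {ω | Y ω < X ω} = ∫⁻ ω, ENNReal.ofReal (exp (-r * Y ω)) ∂μ := by
    rw [measure_lt_eq_lintegral_of_indepFun hX hY hXY]
    apply lintegral_congr_ae
    filter_upwards [hY_nonneg] with ω hω using hX_tail (Y ω) hω
  rw [measureReal_def, h_lintegral, mgf]
  exact (integral_eq_lintegral_of_nonneg_ae (ae_of_all _ fun _ ↦ (exp_pos _).le)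
    (hY.const_mul (-r)).exp.aestronglyMeasurable).symm

section Exponential

lemma integral_exponentialPDFReal_eq_one {r : ℝ} (hr : 0 < r) :
    ∫ x, exponentialPDFReal r x = 1 := by
  rw [integral_eq_lintegral_of_nonneg_ae (ae_of_all _ (exponentialPDFReal_nonneg hr))
    (stronglyMeasurable_exponentialPDFReal r).aestronglyMeasurable]
  exact congrArg ENNReal.toReal (lintegral_exponentialPDF_eq_one hr)

lemma exponentialPDFReal_mul_exp {r t : ℝ} (ht : t ≠ r) (x : ℝ) :
    exponentialPDFReal r x * exp (t * x) = r / (r - t) * exponentialPDFReal (r - t) x := by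
  have hrt : r - t ≠ 0 := sub_ne_zero.mpr ht.symm
  simp only [exponentialPDFReal, gammaPDFReal, rpow_one, Gamma_one, div_one, sub_self, rpow_zero,
    mul_one]
  split_ifs
  · rw [mul_assoc, ← exp_add, ← mul_assoc, div_mul_cancel₀ r hrt]
    ring_nf
  · simp only [zero_mul, mul_zero]

lemma mgf_id_expMeasure {r t : ℝ} (hr : 0 < r) (ht : t < r) :
    mgf id (expMeasure r) t = r / (r - t) := by
  calc mgf id (expMeasure r) t
      = ∫ x, exponentialPDFReal r x * exp (t * x) := by
        rw [mgf, expMeasure, gammaMeasure]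
        refine (integral_withDensity_eq_integral_toReal_smul
          (measurable_exponentialPDFReal r).ennreal_ofReal
          (ae_of_all _ fun _ ↦ ENNReal.ofReal_lt_top) _).trans ?_
        refine integral_congr_ae (ae_of_all _ fun x ↦ ?_)
        simp only [smul_eq_mul, id, ENNReal.toReal_ofReal (exponentialPDFReal_nonneg hr x)]
    _ = ∫ x, r / (r - t) * exponentialPDFReal (r - t) x := by
        simp only [exponentialPDFReal_mul_exp ht.ne]
    _ = r / (r - t) := by
        rw [integral_const_mul, integral_exponentialPDFReal_eq_one (sub_pos.mpr ht), mul_one]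

variable {Ω : Type*} [MeasurableSpace Ω] {μ : Measure Ω} [IsProbabilityMeasure μ] {H : Ω → ℝ}
  {m : ℝ}

lemma ae_pos_of_exponential_tail (hH : AEMeasurable H μ)
    (h_tail : ∀ t, 0 ≤ t → μ {ω | t < H ω} = ENNReal.ofReal (exp (-(t / m)))) :
    ∀ᵐ ω ∂μ, 0 < H ω := by
  refine (mem_ae_iff_prob_eq_one₀ (nullMeasurableSet_lt aemeasurable_const hH)).mpr ?_
  rw [h_tail 0 le_rfl, zero_div, neg_zero, exp_zero, ENNReal.ofReal_one]

lemma map_eq_expMeasure_of_exponential_tail (hH : AEMeasurable H μ) (hm : 0 < m)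
    (h_tail : ∀ t, 0 ≤ t → μ {ω | t < H ω} = ENNReal.ofReal (exp (-(t / m)))) :
    μ.map H = expMeasure m⁻¹ := by
  have hr : 0 < m⁻¹ := inv_pos.mpr hm
  have := isProbabilityMeasure_expMeasure hr
  have := Measure.isProbabilityMeasure_map hH
  refine Measure.eq_of_cdf _ _ (StieltjesFunction.ext fun t ↦ ?_)
  rw [cdf_expMeasure_eq hr, cdf_eq_real, map_measureReal_apply_of_aemeasurable hH measurableSet_Iic]
  split_ifs with ht
  · have h_compl : H ⁻¹' Set.Iic t = {ω | t < H ω}ᶜ := by ext; simp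
    rw [h_compl, probReal_compl_eq_one_sub₀ (nullMeasurableSet_lt aemeasurable_const hH),
      measureReal_def, h_tail t ht, ENNReal.toReal_ofReal (exp_pos _).le, div_eq_inv_mul]
  · rw [measureReal_def, measure_eq_zero_iff_ae_notMem.mpr, ENNReal.toReal_zero]
    filter_upwards [ae_pos_of_exponential_tail hH h_tail] with ω hω hωt
    exact ht (hω.le.trans hωt)

lemma mgf_eq_of_exponential_tail (hH : AEMeasurable H μ) (hm : 0 < m)
    (h_tail : ∀ t, 0 ≤ t → μ {ω | t < H ω} = ENNReal.ofReal (exp (-(t / m)))) {t : ℝ}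
    (ht : m * t < 1) :
    mgf H μ t = (1 - m * t)⁻¹ := by
  have ht' : t < m⁻¹ := by rwa [inv_eq_one_div, lt_div_iff₀' hm]
  rw [← mgf_id_map hH, map_eq_expMeasure_of_exponential_tail hH hm h_tail,
    mgf_id_expMeasure (inv_pos.mpr hm) ht', ← inv_div, div_inv_eq_mul, sub_mul,
    inv_mul_cancel₀ hm.ne', mul_comm t]

lemma mgf_neg_div_of_exponential_tail (hH : AEMeasurable H μ) (hm : 0 < m)
    (h_tail : ∀ t, 0 ≤ t → μ {ω | t < H ω} = ENNReal.ofReal (exp (-(t / m)))) {s d : ℝ}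
    (hs : 0 ≤ s) (hd : 0 < d) :
    mgf H μ (-(s / d)) = d / (s * m + d) := by
  have h_nonneg : 0 ≤ m * (s / d) := by positivity
  rw [mgf_eq_of_exponential_tail hH hm h_tail (by linarith), inv_eq_iff_eq_inv, inv_div]
  field_simp
  ring

end Exponential

lemma sinr_le_iff {ρ a h i x : ℝ} (hρ : 0 < ρ) (ha : 0 < a) (hi : 0 ≤ i) :
    a * ρ * h / (ρ * i + 1) ≤ x ↔ h ≤ x / a * i + x / (a * ρ) := by
  have h_rhs : x / a * i + x / (a * ρ) = x * (ρ * i + 1) / (a * ρ) := by field_simp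
  rw [h_rhs, div_le_iff₀ (by positivity), le_div_iff₀' (by positivity)]

theorem fd_near_user_sinr_cdf_general
    {Ω : Type*} [MeasurableSpace Ω] {μ : Measure Ω} [IsProbabilityMeasure μ]
    {H1 HLI : Ω → ℝ} (hH1m : AEMeasurable H1 μ) (hHLIm : AEMeasurable HLI μ) {Ω1 : ℝ}
    (hH1 : ∀ t : ℝ, 0 ≤ t → μ {ω | H1 ω > t} = ENNReal.ofReal (exp (-(t / Ω1))))
    (hHLI : 0 ≤ᵐ[μ] HLI) (hIndep : IndepFun H1 HLI μ)
    {ρ a1 x : ℝ} (hρ : 0 < ρ) (ha1 : 0 < a1) (hx : 0 ≤ x) :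
    μ.real {ω | a1 * ρ * H1 ω / (ρ * HLI ω + 1) ≤ x}
      = 1 - mgf HLI μ (-(x / (a1 * Ω1))) * exp (-(x / (a1 * ρ * Ω1))) := by
  let Y : Ω → ℝ := fun ω ↦ x / a1 * HLI ω + x / (a1 * ρ)
  have hYm : AEMeasurable Y μ := (hHLIm.const_mul _).add_const _
  have hY_nonneg : 0 ≤ᵐ[μ] Y := by
    filter_upwards [hHLI] with ω (hω : 0 ≤ HLI ω)
    change 0 ≤ x / a1 * HLI ω + x / (a1 * ρ)
    positivity
  have hIndepY : IndepFun H1 Y μ :=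
    hIndep.comp (φ := id) (ψ := fun y ↦ x / a1 * y + x / (a1 * ρ)) measurable_id (by fun_prop)
  have h_event : {ω | a1 * ρ * H1 ω / (ρ * HLI ω + 1) ≤ x} =ᵐ[μ] ({ω | Y ω < H1 ω}ᶜ : Set Ω) := by
    filter_upwards [hHLI] with ω hω
    exact propext ((sinr_le_iff hρ ha1 hω).trans not_lt.symm)
  calc μ.real {ω | a1 * ρ * H1 ω / (ρ * HLI ω + 1) ≤ x}
      = 1 - μ.real {ω | Y ω < H1 ω} := by
        rw [measureReal_congr h_event, probReal_compl_eq_one_sub₀ (nullMeasurableSet_lt hYm hH1m)]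
    _ = 1 - mgf Y μ (-Ω1⁻¹) := by
        rw [measureReal_lt_eq_mgf_of_exponential_tail hH1m hYm (fun t ht ↦ ?_) hY_nonneg hIndepY]
        rw [neg_mul, ← div_eq_inv_mul]
        exact hH1 t ht
    _ = 1 - mgf HLI μ (-(x / (a1 * Ω1))) * exp (-(x / (a1 * ρ * Ω1))) := by
        rw [mgf_add_const, mgf_const_mul]
        ring_nf

/-- **CDF of the FD near-user post-SIC SINR.**
If `H1` and `HLI` are independent exponential random variables with means `Ω1` and `ΩLI`,
then `X = a1·ρ·H1/(ρ·HLI + 1)` has the stated cumulative distribution function. -/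
theorem fd_near_user_sinr_cdf
    {Ω : Type*} [MeasurableSpace Ω] (μ : Measure Ω) [IsProbabilityMeasure μ]
    (H1 HLI : Ω → ℝ) (hH1m : Measurable H1) (hHLIm : Measurable HLI)
    (Ω1 ΩLI : ℝ) (hΩ1 : 0 < Ω1) (hΩLI : 0 < ΩLI)
    (hH1 : ∀ t : ℝ, 0 ≤ t → μ {ω | H1 ω > t} = ENNReal.ofReal (Real.exp (-(t / Ω1))))
    (hHLI : ∀ t : ℝ, 0 ≤ t → μ {ω | HLI ω > t} = ENNReal.ofReal (Real.exp (-(t / ΩLI))))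
    (hIndep : IndepFun H1 HLI μ)
    (ρ a1 : ℝ) (hρ : 0 < ρ) (ha1 : 0 < a1) (ha1' : a1 < 1) :
    ∀ x : ℝ, 0 ≤ x →
      (μ {ω | a1 * ρ * H1 ω / (ρ * HLI ω + 1) ≤ x}).toReal
        = 1 - a1 * Ω1 / (x * ΩLI + a1 * Ω1) * Real.exp (-(x / (a1 * ρ * Ω1))) := by
  intro x hx
  have hHLI_pos := ae_pos_of_exponential_tail hHLIm.aemeasurable hHLI
  rw [← mgf_neg_div_of_exponential_tail hHLIm.aemeasurable hΩLI hHLI hx (mul_pos ha1 hΩ1)]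
  exact fd_near_user_sinr_cdf_general hH1m.aemeasurable hHLIm.aemeasurable hH1
    (hHLI_pos.mono fun _ ↦ le_of_lt) hIndep hρ ha1 hx
end

section
/- Let H1 and H_LI be independent exponentially distributed random variables with means Ω1 > 0 and Ω_LI > 0, and let a1, a2 satisfy 0 < a1 < a2 and a1 + a2 = 1. Then for every y with 0 ≤ y < a2/a1, P( a2·H1/(a1·H1 + H_LI) > y ) = (a2 − y·a1)·Ω1 / ( (a2 − y·a1)·Ω1 + y·Ω_LI ), while for y ≥ a2/a1 this probability is 0. -/
open MeasureTheory ProbabilityTheory Real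

/-!
For positive `h` and `g`, `y < a2 h / (a1 h + g)` is the linear condition `y g < (a2 - y a1) h`.
For `y ≥ 0` it fails when `a2 ≤ y a1`. Otherwise, given `g`, the exponential tail of `h` turns its
probability into the Laplace transform of the law of `g`.
-/

lemma measure_Ioi_eq_one_of_le {α : Type*} [Preorder α] [MeasurableSpace α] {ν : Measure α}
    [IsProbabilityMeasure ν] {a b : α} (hab : a ≤ b) (hb : ν (Set.Ioi b) = 1) :
    ν (Set.Ioi a) = 1 :=
  prob_le_one.antisymm (hb ▸ measure_mono (Set.Ioi_subset_Ioi hab))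

lemma lt_mul_div_mul_add_iff {K : Type*} [Field K] [LinearOrder K] [IsStrictOrderedRing K]
    {a1 a2 h g y : K} (hden : 0 < a1 * h + g) :
    y < a2 * h / (a1 * h + g) ↔ y * g < (a2 - y * a1) * h := by
  rw [lt_div_iff₀ hden]
  constructor <;> intro hlt <;> linarith

section ExponentialLaw

variable {r s : ℝ}

lemma expMeasure_Ioi (hr : 0 < r) {t : ℝ} (ht : 0 ≤ t) :
    expMeasure r (Set.Ioi t) = ENNReal.ofReal (exp (-(r * t))) := by
  have := isProbabilityMeasure_expMeasure hr
  rw [← ofReal_measureReal (μ := expMeasure r), ← Set.compl_Iic,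
    probReal_compl_eq_one_sub measurableSet_Iic, ← cdf_eq_real, cdf_expMeasure_eq hr, if_pos ht,
    sub_sub_cancel]

lemma ae_pos_expMeasure (hr : 0 < r) : ∀ᵐ x ∂expMeasure r, 0 < x := by
  have := isProbabilityMeasure_expMeasure hr
  refine (mem_ae_iff_prob_eq_one measurableSet_Ioi).2 ?_
  rw [expMeasure_Ioi hr le_rfl, mul_zero, neg_zero, exp_zero, ENNReal.ofReal_one]

lemma eq_expMeasure_of_measure_Ioi {ν : Measure ℝ} [IsProbabilityMeasure ν] (hr : 0 < r)
    (hν : ∀ t, 0 ≤ t → ν (Set.Ioi t) = ENNReal.ofReal (exp (-(r * t)))) :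
    ν = expMeasure r := by
  have := isProbabilityMeasure_expMeasure hr
  have agree_of_nonneg (t : ℝ) (ht : 0 ≤ t) : ν (Set.Ioi t) = expMeasure r (Set.Ioi t) := by
    rw [hν t ht, expMeasure_Ioi hr ht]
  have exp_Ioi_zero : expMeasure r (Set.Ioi 0) = 1 :=
    (mem_ae_iff_prob_eq_one measurableSet_Ioi).1 (ae_pos_expMeasure hr)
  refine Measure.ext_of_Iic _ _ fun t => ?_
  rw [← Set.compl_Ioi, prob_compl_eq_one_sub measurableSet_Ioi,
    prob_compl_eq_one_sub measurableSet_Ioi]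
  congr 1
  rcases le_total 0 t with ht | ht
  · exact agree_of_nonneg t ht
  · rw [measure_Ioi_eq_one_of_le ht exp_Ioi_zero,
      measure_Ioi_eq_one_of_le ht ((agree_of_nonneg 0 le_rfl).trans exp_Ioi_zero)]

lemma exponentialPDF_mul_ofReal_exp_neg {k : ℝ} (hr : 0 < r) (hrk : 0 < r + k) (x : ℝ) :
    exponentialPDF r x * ENNReal.ofReal (exp (-(k * x)))
      = ENNReal.ofReal (r / (r + k)) * exponentialPDF (r + k) x := by
  rcases lt_or_ge x 0 with hx | hx
  · rw [exponentialPDF_of_neg hx, exponentialPDF_of_neg hx, zero_mul, mul_zero]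
  · rw [exponentialPDF_of_nonneg hx, exponentialPDF_of_nonneg hx,
      ← ENNReal.ofReal_mul (by positivity), ← ENNReal.ofReal_mul (by positivity),
      mul_assoc, ← exp_add, ← mul_assoc, div_mul_cancel₀ _ hrk.ne', add_mul, neg_add]

lemma lintegral_exp_neg_mul_expMeasure {k : ℝ} (hr : 0 < r) (hrk : 0 < r + k) :
    ∫⁻ x, ENNReal.ofReal (exp (-(k * x))) ∂expMeasure r = ENNReal.ofReal (r / (r + k)) := by
  have measurable_pdf : Measurable (exponentialPDF r) :=
    (measurable_exponentialPDFReal r).ennreal_ofReal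
  calc ∫⁻ x, ENNReal.ofReal (exp (-(k * x))) ∂expMeasure r
      = ∫⁻ x, exponentialPDF r x * ENNReal.ofReal (exp (-(k * x))) :=
        lintegral_withDensity_eq_lintegral_mul _ measurable_pdf (by fun_prop)
    _ = ENNReal.ofReal (r / (r + k)) * ∫⁻ x, exponentialPDF (r + k) x := by
        simp_rw [exponentialPDF_mul_ofReal_exp_neg hr hrk]
        exact lintegral_const_mul' _ _ ENNReal.ofReal_ne_top
    _ = ENNReal.ofReal (r / (r + k)) := by
        rw [lintegral_exponentialPDF_eq_one hrk, mul_one]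

lemma expMeasure_prod_mul_lt_mul (hr : 0 < r) (hs : 0 < s) {b d : ℝ} (hb : 0 ≤ b) (hd : 0 < d) :
    ((expMeasure s).prod (expMeasure r)) {p | b * p.1 < d * p.2}
      = ENNReal.ofReal (d * s / (d * s + b * r)) := by
  have := isProbabilityMeasure_expMeasure hr
  have section_eq (x : ℝ) : Prod.mk x ⁻¹' {p : ℝ × ℝ | b * p.1 < d * p.2} = Set.Ioi (b * x / d) :=
    Set.ext fun _ => (div_lt_iff₀' hd).symm
  calc ((expMeasure s).prod (expMeasure r)) {p | b * p.1 < d * p.2}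
      = ∫⁻ x, expMeasure r (Set.Ioi (b * x / d)) ∂expMeasure s := by
        rw [Measure.prod_apply (measurableSet_lt (by fun_prop) (by fun_prop))]
        simp_rw [section_eq]
    _ = ∫⁻ x, ENNReal.ofReal (exp (-(r * b / d * x))) ∂expMeasure s := by
        refine lintegral_congr_ae ?_
        filter_upwards [ae_pos_expMeasure hs] with x hx
        rw [expMeasure_Ioi hr (by positivity)]
        congr 3
        ring
    _ = ENNReal.ofReal (s / (s + r * b / d)) :=
        lintegral_exp_neg_mul_expMeasure hs (by positivity)
    _ = ENNReal.ofReal (d * s / (d * s + b * r)) := by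
        congr 1
        field_simp

end ExponentialLaw

section RandomVariables

variable {Ω : Type*} [MeasurableSpace Ω] {μ : Measure Ω} {X Y : Ω → ℝ} {r s : ℝ}

lemma hasLaw_expMeasure_of_measure_gt [IsProbabilityMeasure μ] (hXm : AEMeasurable X μ) {m : ℝ}
    (hm : 0 < m) (hX : ∀ t, 0 ≤ t → μ {ω | X ω > t} = ENNReal.ofReal (exp (-(t / m)))) :
    HasLaw X (expMeasure m⁻¹) μ where
  aemeasurable := hXm
  map_eq := by
    have := Measure.isProbabilityMeasure_map hXm
    refine eq_expMeasure_of_measure_Ioi (inv_pos.2 hm) fun t ht => ?_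
    rw [Measure.map_apply_of_aemeasurable hXm measurableSet_Ioi, inv_mul_eq_div]
    exact hX t ht

lemma ae_pos_of_hasLaw_expMeasure (hr : 0 < r) (hX : HasLaw X (expMeasure r) μ) :
    ∀ᵐ ω ∂μ, 0 < X ω :=
  (hX.ae_iff (by fun_prop)).2 (ae_pos_expMeasure hr)

lemma measure_mul_lt_mul_of_indepFun_expMeasure (hr : 0 < r) (hs : 0 < s)
    (hX : HasLaw X (expMeasure r) μ) (hY : HasLaw Y (expMeasure s) μ) (hXY : IndepFun X Y μ)
    {b d : ℝ} (hb : 0 ≤ b) (hd : 0 < d) :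
    μ {ω | b * Y ω < d * X ω} = ENNReal.ofReal (d * s / (d * s + b * r)) := by
  have := isProbabilityMeasure_expMeasure hr
  have := hX.isProbabilityMeasure
  have joint_law := (indepFun_iff_hasLaw_prodMk_prod hY hX).1 hXY.symm
  rw [← expMeasure_prod_mul_lt_mul hr hs hb hd]
  exact joint_law.measure_eq (p := fun p => b * p.1 < d * p.2)
    (measurableSet_lt (by fun_prop) (by fun_prop))

end RandomVariables

theorem fd_high_snr_sinr_ccdf_general
    {Ω : Type*} [MeasurableSpace Ω] {μ : Measure Ω} {H1 HLI : Ω → ℝ} {Ω1 ΩLI : ℝ}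
    (hΩ1 : 0 < Ω1) (hΩLI : 0 < ΩLI)
    (hH1 : HasLaw H1 (expMeasure Ω1⁻¹) μ) (hHLI : HasLaw HLI (expMeasure ΩLI⁻¹) μ)
    (hIndep : IndepFun H1 HLI μ) {a1 a2 y : ℝ} (ha1 : 0 ≤ a1) (hy : 0 ≤ y) :
    (y * a1 < a2 →
        (μ {ω | a2 * H1 ω / (a1 * H1 ω + HLI ω) > y}).toReal
          = (a2 - y * a1) * Ω1 / ((a2 - y * a1) * Ω1 + y * ΩLI)) ∧
      (a2 ≤ y * a1 → (μ {ω | a2 * H1 ω / (a1 * H1 ω + HLI ω) > y}).toReal = 0) := by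
  have hH1_pos := ae_pos_of_hasLaw_expMeasure (inv_pos.2 hΩ1) hH1
  have hHLI_pos := ae_pos_of_hasLaw_expMeasure (inv_pos.2 hΩLI) hHLI
  have event_eq : μ {ω | a2 * H1 ω / (a1 * H1 ω + HLI ω) > y}
      = μ {ω | y * HLI ω < (a2 - y * a1) * H1 ω} := by
    refine measure_congr (Filter.eventuallyEq_set.2 ?_)
    filter_upwards [hH1_pos, hHLI_pos] with ω h1 hLI
    exact lt_mul_div_mul_add_iff (by positivity)
  rw [event_eq]
  refine ⟨fun hlt => ?_, fun hle => ?_⟩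
  · have hd : 0 < a2 - y * a1 := sub_pos.2 hlt
    rw [measure_mul_lt_mul_of_indepFun_expMeasure (inv_pos.2 hΩ1) (inv_pos.2 hΩLI) hH1 hHLI hIndep
      hy hd, ENNReal.toReal_ofReal (by positivity)]
    field_simp
  · have event_null : μ {ω | y * HLI ω < (a2 - y * a1) * H1 ω} = 0 := by
      refine measure_eq_zero_iff_ae_notMem.2 ?_
      filter_upwards [hH1_pos, hHLI_pos] with ω h1 hLI
      exact not_lt.2 ((mul_nonpos_of_nonpos_of_nonneg (sub_nonpos.2 hle) h1.le).trans
        (mul_nonneg hy hLI.le))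
    rw [event_null, ENNReal.toReal_zero]

/-- **Complementary CDF of the high-SNR SINR `a2·H1/(a1·H1 + H_LI)`.**
If `H1` and `HLI` are independent exponential random variables with means `Ω1` and `ΩLI`,
then for `0 ≤ y < a2/a1` the tail probability has the stated form, and it vanishes
for `y ≥ a2/a1`. -/
theorem fd_high_snr_sinr_ccdf
    {Ω : Type*} [MeasurableSpace Ω] (μ : Measure Ω) [IsProbabilityMeasure μ]
    (H1 HLI : Ω → ℝ) (hH1m : Measurable H1) (hHLIm : Measurable HLI)
    (Ω1 ΩLI : ℝ) (hΩ1 : 0 < Ω1) (hΩLI : 0 < ΩLI)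
    (hH1 : ∀ t : ℝ, 0 ≤ t → μ {ω | H1 ω > t} = ENNReal.ofReal (Real.exp (-(t / Ω1))))
    (hHLI : ∀ t : ℝ, 0 ≤ t → μ {ω | HLI ω > t} = ENNReal.ofReal (Real.exp (-(t / ΩLI))))
    (hIndep : IndepFun H1 HLI μ)
    (a1 a2 : ℝ) (ha1 : 0 < a1) (ha12 : a1 < a2) (hsum : a1 + a2 = 1) :
    (∀ y : ℝ, 0 ≤ y → y < a2 / a1 →
        (μ {ω | a2 * H1 ω / (a1 * H1 ω + HLI ω) > y}).toReal
          = (a2 - y * a1) * Ω1 / ((a2 - y * a1) * Ω1 + y * ΩLI)) ∧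
      (∀ y : ℝ, a2 / a1 ≤ y →
        (μ {ω | a2 * H1 ω / (a1 * H1 ω + HLI ω) > y}).toReal = 0) := by
  have ccdf {y : ℝ} (hy : 0 ≤ y) := fd_high_snr_sinr_ccdf_general (a2 := a2) hΩ1 hΩLI
    (hasLaw_expMeasure_of_measure_gt hH1m.aemeasurable hΩ1 hH1)
    (hasLaw_expMeasure_of_measure_gt hHLIm.aemeasurable hΩLI hHLI) hIndep ha1.le hy
  exact ⟨fun y hy hlt => (ccdf hy).1 ((lt_div_iff₀ ha1).1 hlt), fun y hle =>
    (ccdf ((div_pos (ha1.trans ha12) ha1).le.trans hle)).2 ((div_le_iff₀ ha1).1 hle)⟩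
end

section
/- Let Ω1, Ω_LI > 0 with Ω_LI ≠ a1·Ω1, fix a1 ∈ (0,1), and for ρ > 0 define R(ρ) = ( a1·Ω1 / (ln 2 · (Ω_LI − a1·Ω1)) ) · [ exp(1/(a1·ρ·Ω1))·Ei(−1/(a1·ρ·Ω1)) − exp(1/(ρ·Ω_LI))·Ei(−1/(ρ·Ω_LI)) ] (the full-duplex ergodic rate of the near user). Then lim_{ρ→∞} R(ρ) = ( a1·Ω1 / (ln 2 · (Ω_LI − a1·Ω1)) ) · ln( Ω_LI/(a1·Ω1) ); in particular R(ρ) converges to a finite rate ceiling and lim_{ρ→∞} R(ρ)/log₂ ρ = 0, i.e. the high-SNR slope of the near user in full-duplex NOMA equals 0. -/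
open MeasureTheory Filter Real

/-- The exponential integral: for `x > 0`, `Ei (-x) = -∫_x^∞ e^{-t}/t dt`. -/
noncomputable def Ei (x : ℝ) : ℝ := -∫ t in Set.Ioi (-x), Real.exp (-t) / t

/-!
Integrating `e⁻ᵗ / t` by parts moves the singularity of `Ei (-x)` at `0` into `log`:
`eˣ Ei (-x) = log x - eˣ ∫_x^∞ e⁻ᵗ log t dt`. The last integral converges to `Γ'(1) = -γ` as
`x → 0⁺`, so `eˣ Ei (-x) - log x → γ`. The rate is a difference of two such terms, at `1 / (ρ α)`
and `1 / (ρ β)` with `α = a1 Ω1` and `β = Ω_LI`; there `γ` and `log ρ` cancel and `log (β / α)`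
remains.
-/

open scoped Topology

theorem tendsto_exp_neg_mul_log_atTop : Tendsto (fun t : ℝ => exp (-t) * log t) atTop (𝓝 0) := by
  have log_isLittleO_exp : log =o[atTop] exp :=
    isLittleO_log_id_atTop.trans (by simpa using! isLittleO_pow_exp_atTop (n := 1))
  simpa only [exp_neg, div_eq_inv_mul] using log_isLittleO_exp.tendsto_div_nhds_zero

theorem integrableOn_exp_neg_div_Ioi {x : ℝ} (hx : 0 < x) :
    IntegrableOn (fun t : ℝ => exp (-t) / t) (Set.Ioi x) := by
  refine ((integrableOn_exp_neg_Ioi x).div_const x).mono'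
    (Measurable.aestronglyMeasurable (by fun_prop)) ?_
  filter_upwards [ae_restrict_mem measurableSet_Ioi] with t (hxt : x < t)
  have ht : 0 < t := hx.trans hxt
  rw [norm_of_nonneg (by positivity)]
  gcongr

theorem integral_exp_neg_mul_log_Ioi_zero :
    ∫ t in Set.Ioi (0 : ℝ), exp (-t) * log t = -eulerMascheroniConstant := by
  have Gamma_eventuallyEq : Complex.Gamma =ᶠ[𝓝 1] Complex.GammaIntegral := by
    filter_upwards [(isOpen_lt continuous_const Complex.continuous_re).mem_nhds
      (show (0 : ℝ) < (1 : ℂ).re by simp)] with s hs using Complex.Gamma_eq_integral hs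
  have deriv_eq := Complex.hasDerivAt_Gamma_one.unique
    ((Complex.hasDerivAt_GammaIntegral (by simp)).congr_of_eventuallyEq Gamma_eventuallyEq)
  simp only [sub_self, Complex.cpow_zero, one_mul, ← Complex.ofReal_mul, ← Complex.ofReal_neg,
    integral_complex_ofReal, Complex.ofReal_inj] at deriv_eq
  simpa only [mul_comm] using deriv_eq.symm

theorem integrableOn_exp_neg_mul_log_Ioi_zero :
    IntegrableOn (fun t : ℝ => exp (-t) * log t) (Set.Ioi 0) := by
  -- A non-integrable function has Bochner integral `0`, whereas this one has integral `-γ ≠ 0`.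
  refine Integrable.of_integral_ne_zero ?_
  rw [integral_exp_neg_mul_log_Ioi_zero]
  linarith [one_half_lt_eulerMascheroniConstant]

theorem Ei_neg_eq_exp_neg_mul_log_sub_integral {x : ℝ} (hx : 0 < x) :
    Ei (-x) = exp (-x) * log x - ∫ t in Set.Ioi x, exp (-t) * log t := by
  have exp_neg_deriv : ∀ t ∈ Set.Ioi x, HasDerivAt (fun t => exp (-t)) (-exp (-t)) t :=
    fun t _ => by simpa using (hasDerivAt_neg t).exp
  have log_deriv : ∀ t ∈ Set.Ioi x, HasDerivAt log t⁻¹ t := fun t ht =>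
    hasDerivAt_log (hx.trans ht).ne'
  have boundary : Tendsto (fun t => exp (-t) * log t) (𝓝[>] x) (𝓝 (exp (-x) * log x)) :=
    ((by fun_prop : ContinuousAt (fun t => exp (-t)) x).mul
      (continuousAt_log hx.ne')).continuousWithinAt
  have log_integrable : IntegrableOn (fun t => -exp (-t) * log t) (Set.Ioi x) := by
    simpa only [neg_mul] using!
      (integrableOn_exp_neg_mul_log_Ioi_zero.mono_set (Set.Ioi_subset_Ioi hx.le)).neg
  have parts := integral_Ioi_mul_deriv_eq_deriv_mul exp_neg_deriv log_deriv
    (integrableOn_exp_neg_div_Ioi hx) log_integrable boundary tendsto_exp_neg_mul_log_atTop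
  simp only [neg_mul, integral_neg, ← div_eq_mul_inv] at parts
  rw [Ei, neg_neg, parts]
  ring

theorem tendsto_exp_mul_Ei_neg_sub_log :
    Tendsto (fun x => exp x * Ei (-x) - log x) (𝓝[>] 0) (𝓝 eulerMascheroniConstant) := by
  have tail_tendsto : Tendsto (fun x : ℝ => ∫ t in Set.Ioi x, exp (-t) * log t) (𝓝[>] 0)
      (𝓝 (-eulerMascheroniConstant)) :=
    integral_exp_neg_mul_log_Ioi_zero ▸
      integrableOn_exp_neg_mul_log_Ioi_zero.continuousWithinAt_Ici_primitive_Ioi.mono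
        Set.Ioi_subset_Ici_self
  have exp_tendsto : Tendsto exp (𝓝[>] 0) (𝓝 1) :=
    exp_zero ▸ continuous_exp.continuousWithinAt
  have product_tendsto := (exp_tendsto.mul tail_tendsto).neg
  rw [one_mul, neg_neg] at product_tendsto
  refine product_tendsto.congr' ?_
  filter_upwards [self_mem_nhdsWithin] with x (hx : 0 < x)
  rw [Ei_neg_eq_exp_neg_mul_log_sub_integral hx, mul_sub, ← mul_assoc, ← exp_add, add_neg_cancel,
    exp_zero]
  ring

theorem tendsto_one_div_mul_const_atTop_nhdsGT_zero {𝕜 : Type*} [Field 𝕜] [LinearOrder 𝕜]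
    [IsStrictOrderedRing 𝕜] [TopologicalSpace 𝕜] [OrderTopology 𝕜] {c : 𝕜} (hc : 0 < c) :
    Tendsto (fun r : 𝕜 => 1 / (r * c)) atTop (𝓝[>] 0) := by
  simpa only [one_div] using! tendsto_inv_atTop_nhdsGT_zero.comp (tendsto_id.atTop_mul_const hc)

theorem tendsto_sub_one_div_mul_of_tendsto_sub_log {f : ℝ → ℝ} {C α β : ℝ} (hα : 0 < α)
    (hβ : 0 < β) (hf : Tendsto (fun x => f x - log x) (𝓝[>] 0) (𝓝 C)) :
    Tendsto (fun r => f (1 / (r * α)) - f (1 / (r * β))) atTop (𝓝 (log (β / α))) := by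
  have remainder_tendsto := ((hf.comp (tendsto_one_div_mul_const_atTop_nhdsGT_zero hα)).sub
    (hf.comp (tendsto_one_div_mul_const_atTop_nhdsGT_zero hβ))).add_const (log (β / α))
  rw [sub_self, zero_add] at remainder_tendsto
  refine remainder_tendsto.congr' ?_
  filter_upwards [eventually_gt_atTop 0] with r hr
  simp only [Function.comp_apply, one_div, log_inv, log_mul hr.ne' hα.ne', log_mul hr.ne' hβ.ne',
    log_div hβ.ne' hα.ne']
  ring

theorem fd_near_user_rate_ceiling_general {α β K : ℝ} (hα : 0 < α) (hβ : 0 < β) {R : ℝ → ℝ}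
    (hR : ∀ᶠ ρ in atTop, R ρ =
      K * (exp (1 / (ρ * α)) * Ei (-(1 / (ρ * α))) - exp (1 / (ρ * β)) * Ei (-(1 / (ρ * β))))) :
    Tendsto R atTop (𝓝 (K * log (β / α))) ∧
      Tendsto (fun ρ => R ρ / logb 2 ρ) atTop (𝓝 0) := by
  have rate_tendsto : Tendsto R atTop (𝓝 (K * log (β / α))) :=
    ((tendsto_sub_one_div_mul_of_tendsto_sub_log hα hβ
      tendsto_exp_mul_Ei_neg_sub_log).const_mul K).congr' (hR.mono fun _ h => h.symm)
  exact ⟨rate_tendsto, rate_tendsto.div_atTop (tendsto_logb_atTop one_lt_two)⟩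

/-- **FD near-user rate ceiling and zero high-SNR slope.**
The full-duplex ergodic rate of the near user converges to the finite ceiling
`(a1 Ω1/(ln 2 (Ω_LI − a1 Ω1)))·ln(Ω_LI/(a1 Ω1))` as `ρ → ∞`; in particular
`R(ρ)/log₂ ρ → 0`. -/
theorem fd_near_user_rate_ceiling
    (Ω1 ΩLI : ℝ) (hΩ1 : 0 < Ω1) (hΩLI : 0 < ΩLI)
    (a1 : ℝ) (ha1 : 0 < a1) (ha1' : a1 < 1) (hne : ΩLI ≠ a1 * Ω1)
    (R : ℝ → ℝ)
    (hR : ∀ ρ : ℝ, 0 < ρ →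
      R ρ = a1 * Ω1 / (Real.log 2 * (ΩLI - a1 * Ω1)) *
        (Real.exp (1 / (a1 * ρ * Ω1)) * Ei (-(1 / (a1 * ρ * Ω1)))
          - Real.exp (1 / (ρ * ΩLI)) * Ei (-(1 / (ρ * ΩLI))))) :
    Tendsto R atTop
        (nhds (a1 * Ω1 / (Real.log 2 * (ΩLI - a1 * Ω1)) *
          Real.log (ΩLI / (a1 * Ω1)))) ∧
      Tendsto (fun ρ : ℝ => R ρ / Real.logb 2 ρ) atTop (nhds 0) := by
  refine fd_near_user_rate_ceiling_general (mul_pos ha1 hΩ1) hΩLI ?_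
  filter_upwards [eventually_gt_atTop 0] with ρ hρ
  rw [hR ρ hρ, mul_comm a1 ρ, mul_assoc ρ]
end
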